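/- Moment bounds for the lifted predicted measure: Let μ be any probability measure on R^d and suppose ‖Ψ‖_∞ ≤ κ_Ψ, ‖H‖_∞ ≤ κ_H, Σ ≽ σ I_d and Γ ≽ γ I_K with σ, γ > 0. Then |M(QPμ)| ≤ √(κ_Ψ² + κ_H²), and the covariance of QPμ satisfies min{γσ/(2κ_H² + γ), γ/2} · I_{d+K} ≼ C(QPμ) ≼ blockdiag(2κ_Ψ² I_d + 2Σ, 2κ_H² I_K + Γ) in the Loewner order. -/

import Mathlib

open MeasureTheory Matrix
open scoped BigOperators ENNReal

noncomputable section

namespace EnKF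

/-- Points of `ℝ^n`, with Lebesgue measure as `volume`. -/
abbrev Vec (n : ℕ) := Fin n → ℝ

/-- Euclidean norm of a finitely indexed real vector. -/
def enorm {ι : Type*} [Fintype ι] (v : ι → ℝ) : ℝ := Real.sqrt (∑ i, v i ^ 2)

/-- The weight function `g(v) = 1 + |v|²` on `ℝ^n`. -/
def gw {n : ℕ} (v : Vec n) : ℝ := 1 + ∑ i, v i ^ 2

/-- The weight function `g(u, y) = 1 + |u|² + |y|²` on `ℝ^d × ℝ^K`. -/
def gw2 {d K : ℕ} (p : Vec d × Vec K) : ℝ := 1 + (∑ i, p.1 i ^ 2) + (∑ j, p.2 j ^ 2)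

/-- Weighted total-variation metric with weight `G`:
`d_G(μ₁, μ₂) = sup { |μ₁[f] − μ₂[f]| : f measurable, |f| ≤ G pointwise }`. -/
def dG {E : Type*} [MeasurableSpace E] (G : E → ℝ) (μ₁ μ₂ : Measure E) : ℝ :=
  ⨆ f : {f : E → ℝ // Measurable f ∧ ∀ v, |f v| ≤ G v},
    |(∫ v, f.1 v ∂μ₁) - ∫ v, f.1 v ∂μ₂|

/-- Loewner order on symmetric matrices: `loe A B ↔ A ≼ B`. -/
def loe {ι : Type*} [Fintype ι] (A B : Matrix ι ι ℝ) : Prop := (B - A).PosSemidef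

/-- Mean vector of a measure on `ℝ^n`. -/
def mean {n : ℕ} (μ : Measure (Vec n)) : Vec n := fun i => ∫ v, v i ∂μ

/-- Covariance matrix of a measure on `ℝ^n`. -/
def cov {n : ℕ} (μ : Measure (Vec n)) : Matrix (Fin n) (Fin n) ℝ :=
  Matrix.of fun i j => ∫ v, (v i - mean μ i) * (v j - mean μ j) ∂μ

/-- Density of the Gaussian `N(m, S)` on `ℝ^n`. -/
def gaussDensity {n : ℕ} (m : Vec n) (S : Matrix (Fin n) (Fin n) ℝ) (x : Vec n) : ℝ :=
  (Real.sqrt ((2 * Real.pi) ^ n * S.det))⁻¹ *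
    Real.exp (-(1 / 2) * ((x - m) ⬝ᵥ (S⁻¹ *ᵥ (x - m))))

/-- The (nondegenerate) Gaussian measure `N(m, S)` on `ℝ^n`. -/
def gauss {n : ℕ} (m : Vec n) (S : Matrix (Fin n) (Fin n) ℝ) : Measure (Vec n) :=
  volume.withDensity fun x => ENNReal.ofReal (gaussDensity m S x)

/-- Gaussian projection `G` on `ℝ^n`: the Gaussian with the same mean and covariance. -/
def Gproj {n : ℕ} (μ : Measure (Vec n)) : Measure (Vec n) := gauss (mean μ) (cov μ)

variable {d K : ℕ}

/-- Mean of the first (state) marginal of a measure on `ℝ^d × ℝ^K`. -/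
def meanU (π : Measure (Vec d × Vec K)) : Vec d := fun i => ∫ p, p.1 i ∂π

/-- Mean of the second (data) marginal of a measure on `ℝ^d × ℝ^K`. -/
def meanY (π : Measure (Vec d × Vec K)) : Vec K := fun j => ∫ p, p.2 j ∂π

/-- Block `C^{uu}` of the covariance of a measure on `ℝ^d × ℝ^K`. -/
def covUU (π : Measure (Vec d × Vec K)) : Matrix (Fin d) (Fin d) ℝ :=
  Matrix.of fun i j => ∫ p, (p.1 i - meanU π i) * (p.1 j - meanU π j) ∂π

/-- Block `C^{uy}` of the covariance of a measure on `ℝ^d × ℝ^K`. -/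
def covUY (π : Measure (Vec d × Vec K)) : Matrix (Fin d) (Fin K) ℝ :=
  Matrix.of fun i j => ∫ p, (p.1 i - meanU π i) * (p.2 j - meanY π j) ∂π

/-- Block `C^{yy}` of the covariance of a measure on `ℝ^d × ℝ^K`. -/
def covYY (π : Measure (Vec d × Vec K)) : Matrix (Fin K) (Fin K) ℝ :=
  Matrix.of fun i j => ∫ p, (p.2 i - meanY π i) * (p.2 j - meanY π j) ∂π

/-- Full covariance matrix of a measure on `ℝ^d × ℝ^K`, in block form. -/
def covBlock (π : Measure (Vec d × Vec K)) : Matrix (Fin d ⊕ Fin K) (Fin d ⊕ Fin K) ℝ :=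
  Matrix.fromBlocks (covUU π) (covUY π) (covUY π)ᵀ (covYY π)

/-- Density of a Gaussian on `ℝ^d × ℝ^K` with mean `(mu, my)` and covariance `S`. -/
def jointGaussDensity (mu : Vec d) (my : Vec K)
    (S : Matrix (Fin d ⊕ Fin K) (Fin d ⊕ Fin K) ℝ) (p : Vec d × Vec K) : ℝ :=
  (Real.sqrt ((2 * Real.pi) ^ (d + K) * S.det))⁻¹ *
    Real.exp (-(1 / 2) *
      (Sum.elim (p.1 - mu) (p.2 - my) ⬝ᵥ (S⁻¹ *ᵥ Sum.elim (p.1 - mu) (p.2 - my))))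

/-- Gaussian measure on `ℝ^d × ℝ^K` with mean `(mu, my)` and covariance `S`. -/
def jointGauss (mu : Vec d) (my : Vec K)
    (S : Matrix (Fin d ⊕ Fin K) (Fin d ⊕ Fin K) ℝ) : Measure (Vec d × Vec K) :=
  volume.withDensity fun p => ENNReal.ofReal (jointGaussDensity mu my S p)

/-- Density of the Gaussian projection of a measure on `ℝ^d × ℝ^K`. -/
def gProjDensity2 (π : Measure (Vec d × Vec K)) : Vec d × Vec K → ℝ :=
  jointGaussDensity (meanU π) (meanY π) (covBlock π)

/-- Gaussian projection on `ℝ^d × ℝ^K`. -/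
def Gproj2 (π : Measure (Vec d × Vec K)) : Measure (Vec d × Vec K) :=
  jointGauss (meanU π) (meanY π) (covBlock π)

/-- Prediction operator `P`: the law of `Ψ(V) + ξ`, `V ∼ μ` independent of `ξ ∼ N(0, Σ)`. -/
def Pop (Psi : Vec d → Vec d) (Sig : Matrix (Fin d) (Fin d) ℝ)
    (μ : Measure (Vec d)) : Measure (Vec d) :=
  (μ.prod (gauss 0 Sig)).map fun p => Psi p.1 + p.2

/-- Lifting operator `Q`: the law of `(U, H(U) + η)`, `U ∼ μ` independent of `η ∼ N(0, Γ)`. -/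
def Qop (H : Vec d → Vec K) (Gam : Matrix (Fin K) (Fin K) ℝ)
    (μ : Measure (Vec d)) : Measure (Vec d × Vec K) :=
  (μ.prod (gauss 0 Gam)).map fun p => (p.1, H p.1 + p.2)

/-- Lebesgue density of `Pμ`. -/
def predDensity (Psi : Vec d → Vec d) (Sig : Matrix (Fin d) (Fin d) ℝ)
    (μ : Measure (Vec d)) (u : Vec d) : ℝ :=
  (Real.sqrt ((2 * Real.pi) ^ d * Sig.det))⁻¹ *
    ∫ v, Real.exp (-(1 / 2) * ((u - Psi v) ⬝ᵥ (Sig⁻¹ *ᵥ (u - Psi v)))) ∂μ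

/-- Lebesgue density of `QPμ` on `ℝ^d × ℝ^K`. -/
def qpDensity (Psi : Vec d → Vec d) (Sig : Matrix (Fin d) (Fin d) ℝ)
    (H : Vec d → Vec K) (Gam : Matrix (Fin K) (Fin K) ℝ)
    (μ : Measure (Vec d)) (p : Vec d × Vec K) : ℝ :=
  predDensity Psi Sig μ p.1 * gaussDensity (H p.1) Gam p.2

/-- Conditioning operator `B` applied to a (joint) density `f` and a datum `y†`:
the measure on `ℝ^d` with density `u ↦ f(u, y†) / ∫ f(U, y†) dU`. -/
def condM (f : Vec d × Vec K → ℝ) (ydag : Vec K) : Measure (Vec d) :=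
  volume.withDensity fun u => ENNReal.ofReal (f (u, ydag) / ∫ U, f (U, ydag))

/-- Kalman transport operator `T`: the pushforward of `π` under
`(u, y) ↦ u + C^{uy}(π) C^{yy}(π)⁻¹ (y† − y)`. -/
def Top (ydag : Vec K) (π : Measure (Vec d × Vec K)) : Measure (Vec d) :=
  π.map fun p => p.1 + covUY π *ᵥ ((covYY π)⁻¹ *ᵥ (ydag - p.2))

/-- Operator (spectral) norm of a real matrix. -/
def opNorm {ι : Type*} [Fintype ι] {κ : Type*} [Fintype κ] (A : Matrix ι κ ℝ) : ℝ :=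
  ⨆ x : {x : κ → ℝ // ∑ i, x i ^ 2 ≤ 1}, enorm (A *ᵥ x.1)

/-- Frobenius norm of a real matrix. -/
def frobNorm {ι κ : Type*} [Fintype ι] [Fintype κ] (A : Matrix ι κ ℝ) : ℝ :=
  Real.sqrt (∑ i, ∑ j, A i j ^ 2)

/-- Weighted norm `|x|_S = |S^{-1/2} x|`, i.e. `√(xᵀ S⁻¹ x)`. -/
def wnorm {n : ℕ} (S : Matrix (Fin n) (Fin n) ℝ) (x : Vec n) : ℝ :=
  Real.sqrt (x ⬝ᵥ (S⁻¹ *ᵥ x))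

/-- The set `𝒫_R(ℝ^n)` of probability measures with `|M(μ)| ≤ R` and
`R⁻² I ≼ C(μ) ≼ R² I`. -/
def PR (n : ℕ) (R : ℝ) : Set (Measure (Vec n)) :=
  {μ | IsProbabilityMeasure μ ∧ enorm (mean μ) ≤ R ∧
    loe ((R ^ 2)⁻¹ • 1) (cov μ) ∧ loe (cov μ) (R ^ 2 • 1)}

/-- The set `𝒫_R(ℝ^d × ℝ^K)`. -/
def PR2 (d K : ℕ) (R : ℝ) : Set (Measure (Vec d × Vec K)) :=
  {π | IsProbabilityMeasure π ∧ enorm (Sum.elim (meanU π) (meanY π)) ≤ R ∧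
    loe ((R ^ 2)⁻¹ • 1) (covBlock π) ∧ loe (covBlock π) (R ^ 2 • 1)}

/-- Smallest eigenvalue of a symmetric matrix (Rayleigh quotient form). -/
def lambdaMin {ι : Type*} [Fintype ι] (A : Matrix ι ι ℝ) : ℝ :=
  ⨅ x : {x : ι → ℝ // ∑ i, x i ^ 2 = 1}, x.1 ⬝ᵥ (A *ᵥ x.1)

/-- Kullback–Leibler divergence `KL(μ₁ ‖ μ₂) = ∫ (dμ₁/dμ₂) log (dμ₁/dμ₂) dμ₂`. -/
def kl {E : Type*} [MeasurableSpace E] (μ₁ μ₂ : Measure E) : ℝ :=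
  ∫ v, ((μ₁.rnDeriv μ₂ v).toReal * Real.log (μ₁.rnDeriv μ₂ v).toReal) ∂μ₂

/-! The quadratic form of the covariance of `QPμ` at `(a, b)` is `Var(a·U + b·H(U)) + bᵀΓb` with
`U ∼ Pμ`, and the one of the covariance of `Pμ` at `a` is `Var(a·Ψ(V)) + aᵀΣa` with `V ∼ μ`, where
bounded maps have `Var(b·H) ≤ κ_H²|b|²`. The upper bound is then `Var(X + Y) ≤ 2 Var X + 2 Var Y`.
For the lower bound write `s = |b|²` and `z = Var(a·U + b·H(U))`. Minkowski's inequality gives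
`√Var(a·U) ≤ √z + κ_H√s`, and by a weighted Cauchy–Schwarz inequality
`(√z + κ_H√s)² ≤ (1 + 2κ_H²/γ)(z + γs/2)`: half of `bᵀΓb ≥ γs` absorbs the correlation between `U`
and `H(U)`, the other half remains. -/

section LoewnerOrder

variable {ι κ : Type*} [Fintype ι] [Fintype κ] {A B : Matrix ι ι ℝ}

lemma loe.isHermitian_right (h : loe A B) (hA : A.IsHermitian) : B.IsHermitian := by
  simpa using h.isHermitian.add hA

lemma loe.dotProduct_mulVec_le (h : loe A B) (x : ι → ℝ) : x ⬝ᵥ A *ᵥ x ≤ x ⬝ᵥ B *ᵥ x := by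
  have := h.dotProduct_mulVec_nonneg x
  rwa [star_trivial, sub_mulVec, dotProduct_sub, sub_nonneg] at this

lemma loe_of_dotProduct_mulVec_le (hA : A.IsHermitian) (hB : B.IsHermitian)
    (h : ∀ x, x ⬝ᵥ A *ᵥ x ≤ x ⬝ᵥ B *ᵥ x) : loe A B :=
  .of_dotProduct_mulVec_nonneg (hB.sub hA) fun x => by
    rw [star_trivial, sub_mulVec, dotProduct_sub, sub_nonneg]
    exact h x

lemma loe_of_sumElim_dotProduct_mulVec_le {A B : Matrix (ι ⊕ κ) (ι ⊕ κ) ℝ}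
    (hA : A.IsHermitian) (hB : B.IsHermitian)
    (h : ∀ a b, Sum.elim a b ⬝ᵥ A *ᵥ Sum.elim a b ≤ Sum.elim a b ⬝ᵥ B *ᵥ Sum.elim a b) :
    loe A B :=
  loe_of_dotProduct_mulVec_le hA hB fun x => by
    simpa only [Sum.elim_comp_inl_inr] using h (x ∘ Sum.inl) (x ∘ Sum.inr)

lemma loe.trans {C : Matrix ι ι ℝ} (hAB : loe A B) (hBC : loe B C) : loe A C := by
  simpa [loe] using hBC.add hAB

variable [DecidableEq ι]

lemma dotProduct_smul_one_mulVec (c : ℝ) (x : ι → ℝ) :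
    x ⬝ᵥ (c • 1 : Matrix ι ι ℝ) *ᵥ x = c * (x ⬝ᵥ x) := by
  rw [smul_mulVec, one_mulVec, dotProduct_smul, smul_eq_mul]

lemma loe.posDef {c : ℝ} (h : loe (c • 1) A) (hc : 0 < c) : A.PosDef := by
  simpa using (PosDef.one.smul hc).add_posSemidef h

end LoewnerOrder

section EuclideanNorm

open WithLp

variable {ι κ : Type*} [Fintype ι] [Fintype κ]

lemma enorm_eq_norm_toLp (x : ι → ℝ) : enorm x = ‖toLp 2 x‖ := by
  simp [enorm, EuclideanSpace.norm_eq]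

lemma enorm_mul_self (x : ι → ℝ) : enorm x * enorm x = x ⬝ᵥ x := by
  rw [enorm, Real.mul_self_sqrt (by positivity)]
  simp only [dotProduct, sq]

lemma abs_dotProduct_le (x y : ι → ℝ) : |x ⬝ᵥ y| ≤ enorm x * enorm y := by
  simpa [enorm_eq_norm_toLp, EuclideanSpace.inner_toLp_toLp, dotProduct_comm]
    using abs_real_inner_le_norm (toLp 2 x) (toLp 2 y)

lemma norm_le_enorm (x : ι → ℝ) : ‖x‖ ≤ enorm x := by
  rw [enorm_eq_norm_toLp]
  exact (pi_norm_le_iff_of_nonneg (norm_nonneg _)).mpr (PiLp.norm_apply_le (toLp 2 x))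

lemma enorm_sumElim_le {x : ι → ℝ} {y : κ → ℝ} {r s : ℝ} (hx : enorm x ≤ r) (hy : enorm y ≤ s) :
    enorm (Sum.elim x y) ≤ √(r ^ 2 + s ^ 2) := by
  rw [enorm, Fintype.sum_sum_type]
  exact Real.sqrt_le_sqrt (add_le_add (Real.sqrt_le_iff.mp hx).2 (Real.sqrt_le_iff.mp hy).2)

end EuclideanNorm

section VectorValued

open ProbabilityTheory WithLp

variable {Ω ι : Type*} [Fintype ι] [MeasurableSpace Ω] {μ : Measure Ω} {F : Ω → ι → ℝ}

lemma memLp_dotProduct {p : ℝ≥0∞} (hF : MemLp F p μ) (b : ι → ℝ) :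
    MemLp (fun ω => b ⬝ᵥ F ω) p μ :=
  memLp_finsetSum _ fun i _ => (hF.eval i).const_mul (b i)

lemma memLp_of_enorm_le [IsFiniteMeasure μ] {r : ℝ} (hF : Measurable F)
    (h : ∀ ω, enorm (F ω) ≤ r) (p : ℝ≥0∞) :
    MemLp F p μ :=
  .of_bound hF.aestronglyMeasurable r (.of_forall fun ω => (norm_le_enorm _).trans (h ω))

variable [IsProbabilityMeasure μ] {r : ℝ}

lemma enorm_integral_le (hF : Measurable F) (h : ∀ ω, enorm (F ω) ≤ r) :
    enorm (fun i => ∫ ω, F ω i ∂μ) ≤ r := by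
  have hint (i : ι) : Integrable (fun ω => toLp 2 (F ω) i) μ :=
    (memLp_of_enorm_le hF h 1).eval i |>.integrable le_rfl
  have hmean : toLp 2 (fun i => ∫ ω, F ω i ∂μ) = ∫ ω, toLp 2 (F ω) ∂μ := by
    ext i
    exact (eval_integral_piLp hint i).symm
  rw [enorm_eq_norm_toLp, hmean]
  simpa using norm_integral_le_of_norm_le_const (μ := μ) (f := fun ω => toLp 2 (F ω))
    (.of_forall fun ω => (enorm_eq_norm_toLp (F ω)).symm.trans_le (h ω))

lemma variance_dotProduct_le_of_enorm_le (hF : Measurable F) (h : ∀ ω, enorm (F ω) ≤ r)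
    (b : ι → ℝ) : Var[fun ω => b ⬝ᵥ F ω; μ] ≤ r ^ 2 * (b ⬝ᵥ b) := by
  have hb (ω : Ω) : b ⬝ᵥ F ω ∈ Set.Icc (-(enorm b * r)) (enorm b * r) :=
    abs_le.mp ((abs_dotProduct_le b (F ω)).trans
      (mul_le_mul_of_nonneg_left (h ω) (Real.sqrt_nonneg _)))
  calc Var[fun ω => b ⬝ᵥ F ω; μ] ≤ ((enorm b * r - -(enorm b * r)) / 2) ^ 2 :=
        variance_le_sq_of_bounded (.of_forall hb) (by fun_prop)
    _ = r ^ 2 * (enorm b * enorm b) := by ring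
    _ = r ^ 2 * (b ⬝ᵥ b) := by rw [enorm_mul_self]

end VectorValued

section Variance

open ProbabilityTheory

variable {Ω : Type*} [MeasurableSpace Ω] {μ : Measure Ω} [IsFiniteMeasure μ] {X Y : Ω → ℝ}

lemma sq_covariance_le (hX : MemLp X 2 μ) (hY : MemLp Y 2 μ) :
    cov[X, Y; μ] ^ 2 ≤ Var[X; μ] * Var[Y; μ] := by
  have h : discrim Var[X; μ] (2 * cov[X, Y; μ]) Var[Y; μ] ≤ 0 := by
    refine discrim_le_zero fun t => ?_
    have h := variance_nonneg (fun ω => t * X ω + Y ω) μ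
    rw [variance_fun_add (hX.const_mul t) hY, variance_const_mul, covariance_const_mul_left] at h
    linarith
  rw [discrim] at h
  linarith

lemma variance_add_le_two_mul_add (hX : MemLp X 2 μ) (hY : MemLp Y 2 μ) :
    Var[fun ω => X ω + Y ω; μ] ≤ 2 * (Var[X; μ] + Var[Y; μ]) := by
  have h := variance_nonneg (fun ω => X ω - Y ω) μ
  rw [variance_fun_sub hX hY] at h
  rw [variance_fun_add hX hY]
  linarith

lemma sqrt_variance_sub_le (hX : MemLp X 2 μ) (hY : MemLp Y 2 μ) :
    √Var[fun ω => X ω - Y ω; μ] ≤ √Var[X; μ] + √Var[Y; μ] := by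
  have hcov : |cov[X, Y; μ]| ≤ √Var[X; μ] * √Var[Y; μ] := by
    rw [← Real.sqrt_mul (variance_nonneg X μ)]
    exact Real.abs_le_sqrt (sq_covariance_le hX hY)
  refine Real.sqrt_le_iff.mpr ⟨by positivity, ?_⟩
  rw [variance_fun_sub hX hY, add_sq, Real.sq_sqrt (variance_nonneg X μ),
    Real.sq_sqrt (variance_nonneg Y μ)]
  linarith [neg_le_of_abs_le hcov]

lemma sqrt_variance_le_sqrt_variance_add (hX : MemLp X 2 μ) (hY : MemLp Y 2 μ) :
    √Var[X; μ] ≤ √Var[fun ω => X ω + Y ω; μ] + √Var[Y; μ] := by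
  simpa using sqrt_variance_sub_le (X := fun ω => X ω + Y ω) (hX.add hY) hY

lemma mul_variance_le_variance_add (hX : MemLp X 2 μ) (hY : MemLp Y 2 μ) {r s γ : ℝ}
    (hγ : 0 < γ) (hs : 0 ≤ s) (hYs : Var[Y; μ] ≤ r ^ 2 * s) :
    γ / (2 * r ^ 2 + γ) * Var[X; μ] ≤ Var[fun ω => X ω + Y ω; μ] + γ / 2 * s := by
  set z := Var[fun ω => X ω + Y ω; μ]
  have hz : 0 ≤ z := variance_nonneg _ μ
  have hXz : √Var[X; μ] ≤ √z + |r| * √s := by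
    refine (sqrt_variance_le_sqrt_variance_add hX hY).trans (add_le_add_right ?_ _)
    simpa [Real.sqrt_sq_eq_abs, Real.sqrt_mul (sq_nonneg r)] using Real.sqrt_le_sqrt hYs
  have hXz' : Var[X; μ] ≤ (√z + |r| * √s) ^ 2 := (Real.sqrt_le_iff.mp hXz).2
  have hweighted : γ * (√z + |r| * √s) ^ 2 ≤ (2 * r ^ 2 + γ) * (√z ^ 2 + γ / 2 * √s ^ 2) := by
    rw [← sq_abs r]
    linarith [sq_nonneg (2 * |r| * √z - γ * √s)]
  rw [div_mul_eq_mul_div, div_le_iff₀ (by positivity)]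
  rw [Real.sq_sqrt hz, Real.sq_sqrt hs] at hweighted
  calc γ * Var[X; μ] ≤ γ * (√z + |r| * √s) ^ 2 := by gcongr
    _ ≤ (2 * r ^ 2 + γ) * (z + γ / 2 * s) := hweighted
    _ = (z + γ / 2 * s) * (2 * r ^ 2 + γ) := mul_comm _ _

end Variance

section CovarianceMatrix

open ProbabilityTheory

lemma variance_sum_mul_eq_dotProduct {Ω ι : Type*} [Fintype ι] [MeasurableSpace Ω]
    {μ : Measure Ω} [IsFiniteMeasure μ] {X : ι → Ω → ℝ} (hX : ∀ i, MemLp (X i) 2 μ)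
    (w : ι → ℝ) :
    Var[fun ω => ∑ i, w i * X i ω; μ] = w ⬝ᵥ (Matrix.of fun i j => cov[X i, X j; μ]) *ᵥ w := by
  rw [variance_fun_sum fun i => (hX i).const_mul (w i)]
  simp only [dotProduct, mulVec, Finset.mul_sum, covariance_const_mul_left,
    covariance_const_mul_right, of_apply]
  exact Finset.sum_congr rfl fun i _ => Finset.sum_congr rfl fun j _ => by ring

lemma isHermitian_cov {n : ℕ} (ν : Measure (Vec n)) : (cov ν).IsHermitian :=
  .ext fun i j => by simp [cov, mul_comm]

lemma variance_dotProduct {n : ℕ} {ν : Measure (Vec n)} [IsFiniteMeasure ν]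
    (hν : MemLp id 2 ν) (a : Vec n) : Var[fun u => a ⬝ᵥ u; ν] = a ⬝ᵥ cov ν *ᵥ a :=
  variance_sum_mul_eq_dotProduct (memLp_pi_iff.mp hν) a

lemma isHermitian_covBlock (π : Measure (Vec d × Vec K)) : (covBlock π).IsHermitian := by
  refine .fromBlocks (.ext fun i j => ?_) rfl (.ext fun i j => ?_)
  · simp [covUU, mul_comm]
  · simp [covYY, mul_comm]

lemma variance_dotProduct_add_dotProduct {π : Measure (Vec d × Vec K)} [IsFiniteMeasure π]
    (hπ : MemLp id 2 π) (a : Vec d) (b : Vec K) :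
    Var[fun p => a ⬝ᵥ p.1 + b ⬝ᵥ p.2; π] =
      Sum.elim a b ⬝ᵥ covBlock π *ᵥ Sum.elim a b := by
  let X : Fin d ⊕ Fin K → Vec d × Vec K → ℝ := Sum.elim (fun i p => p.1 i) fun j p => p.2 j
  have hX : ∀ i, MemLp (X i) 2 π :=
    Sum.forall.mpr ⟨memLp_pi_iff.mp hπ.fst, memLp_pi_iff.mp hπ.snd⟩
  have hcov : covBlock π = Matrix.of fun i j => cov[X i, X j; π] := by
    ext (i | i) (j | j)
    · rfl
    · rfl
    · exact covariance_comm _ _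
    · rfl
  rw [hcov, ← variance_sum_mul_eq_dotProduct hX]
  simp [X, dotProduct]

end CovarianceMatrix

section Gaussian

open ProbabilityTheory WithLp
open scoped MatrixOrder

variable {n : ℕ}

lemma map_withDensity_comp {α β : Type*} [MeasurableSpace α] [MeasurableSpace β] (ρ : Measure α)
    {T : α → β} (hT : Measurable T) {h : β → ℝ≥0∞} (hh : Measurable h) :
    (ρ.withDensity (h ∘ T)).map T = (ρ.map T).withDensity h := by
  ext s hs
  rw [Measure.map_apply hT hs, withDensity_apply _ (hT hs), withDensity_apply _ hs,
    setLIntegral_map hs hh hT]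
  rfl

lemma continuous_gaussDensity (m : Vec n) (S : Matrix (Fin n) (Fin n) ℝ) :
    Continuous (gaussDensity m S) := by
  unfold gaussDensity
  fun_prop

lemma gaussDensity_zero_one (x : Vec n) :
    gaussDensity 0 1 x = ∏ i, gaussianPDFReal 0 1 (x i) := by
  have hexp : -(1 / 2) * (x ⬝ᵥ x) = ∑ i, -x i ^ 2 / 2 := by
    rw [dotProduct, Finset.mul_sum]
    exact Finset.sum_congr rfl fun i _ => by ring
  have hconst : √((2 * Real.pi) ^ n) = √(2 * Real.pi) ^ n := by
    simpa using Real.sqrt_prod (Finset.univ : Finset (Fin n)) (x := fun _ => 2 * Real.pi)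
      fun _ _ => by positivity
  simp only [gaussDensity, gaussianPDFReal, det_one, inv_one, one_mulVec, sub_zero, mul_one,
    NNReal.coe_one, hexp, hconst, Finset.prod_mul_distrib, Finset.prod_const, Finset.card_univ,
    Fintype.card_fin, Real.exp_sum, inv_pow]

lemma gauss_zero_one : gauss (0 : Vec n) 1 = Measure.pi fun _ => gaussianReal 0 1 := by
  refine (Measure.pi_eq fun s hs => ?_).symm
  have hnonneg (x : ℝ) : 0 ≤ gaussianPDFReal 0 1 x := gaussianPDFReal_nonneg 0 1 x
  have hint (i : Fin n) : Integrable (gaussianPDFReal 0 1) (volume.restrict (s i)) :=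
    (integrable_gaussianPDFReal 0 1).restrict
  calc gauss 0 1 (Set.univ.pi s)
      = ∫⁻ x, ENNReal.ofReal (∏ i, gaussianPDFReal 0 1 (x i))
          ∂Measure.pi fun i => volume.restrict (s i) := by
        rw [gauss, withDensity_apply _ (.univ_pi hs), volume_pi, Measure.restrict_pi_pi]
        simp only [gaussDensity_zero_one]
    _ = ENNReal.ofReal (∏ i, ∫ x in s i, gaussianPDFReal 0 1 x) := by
        rw [← ofReal_integral_eq_lintegral_ofReal (.fintype_prod hint)
            (.of_forall fun x => Finset.prod_nonneg fun i _ => hnonneg (x i)),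
          integral_fintype_prod_eq_prod]
    _ = ∏ i, gaussianReal 0 1 (s i) := by
        simp only [gaussianReal_apply_eq_integral 0 one_ne_zero]
        exact ENNReal.ofReal_prod_of_nonneg fun i _ => integral_nonneg hnonneg

lemma gaussDensity_zero_one_eq_mul {B : Matrix (Fin n) (Fin n) ℝ} (hB : B.det ≠ 0) (m x : Vec n) :
    gaussDensity 0 1 x = |B.det| * gaussDensity m (B * Bᵀ) (m + B *ᵥ x) := by
  have hquad : (B *ᵥ x) ⬝ᵥ (B * Bᵀ)⁻¹ *ᵥ B *ᵥ x = x ⬝ᵥ x := by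
    have hBx : B⁻¹ *ᵥ B *ᵥ x = x := by
      rw [mulVec_mulVec, nonsing_inv_mul _ hB.isUnit, one_mulVec]
    rw [Matrix.mul_inv_rev, ← mulVec_mulVec, hBx, dotProduct_mulVec, ← transpose_nonsing_inv,
      vecMul_transpose, hBx]
  have hdet : √((2 * Real.pi) ^ n * (B * Bᵀ).det) = √((2 * Real.pi) ^ n) * |B.det| := by
    rw [det_mul, det_transpose, Real.sqrt_mul (by positivity), Real.sqrt_mul_self_eq_abs]
  simp only [gaussDensity, add_sub_cancel_left, hquad, hdet, sub_zero, inv_one, one_mulVec,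
    det_one, mul_one]
  field_simp

lemma smul_map_volume_add_mulVec {ι : Type*} [Fintype ι] [DecidableEq ι] {B : Matrix ι ι ℝ}
    (hB : B.det ≠ 0) (m : ι → ℝ) :
    ENNReal.ofReal |B.det| • (volume : Measure (ι → ℝ)).map (fun x => m + B *ᵥ x) = volume := by
  have hmap : (volume : Measure (ι → ℝ)).map (fun x => m + B *ᵥ x) =
      (volume.map (toLin' B)).map (m + ·) :=
    (Measure.map_map (by fun_prop) (by fun_prop)).symm
  rw [hmap, Real.map_matrix_volume_pi_eq_smul_volume_pi hB, Measure.map_smul,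
    map_add_left_eq_self, smul_smul, ← ENNReal.ofReal_mul (abs_nonneg _), ← abs_mul,
    mul_inv_cancel₀ hB, abs_one, ENNReal.ofReal_one, one_smul]

lemma gauss_mul_transpose {B : Matrix (Fin n) (Fin n) ℝ} (hB : B.det ≠ 0) (m : Vec n) :
    gauss m (B * Bᵀ) = (gauss 0 1).map fun x => m + B *ᵥ x := by
  set c := ENNReal.ofReal |B.det|
  set h := fun z => ENNReal.ofReal (gaussDensity m (B * Bᵀ) z)
  have hh : Measurable h := (continuous_gaussDensity m _).measurable.ennreal_ofReal
  have hT : Measurable fun x => m + B *ᵥ x := by fun_prop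
  have hdens : c • (h ∘ fun x => m + B *ᵥ x) = fun x => ENNReal.ofReal (gaussDensity 0 1 x) := by
    funext x
    rw [gaussDensity_zero_one_eq_mul hB m x, ENNReal.ofReal_mul (abs_nonneg _)]
    rfl
  calc gauss m (B * Bᵀ)
      = (c • volume.map fun x => m + B *ᵥ x).withDensity h := by
        rw [smul_map_volume_add_mulVec hB m]; rfl
    _ = c • (volume.withDensity (h ∘ fun x => m + B *ᵥ x)).map fun x => m + B *ᵥ x := by
        rw [withDensity_smul_measure, map_withDensity_comp _ hT hh]
    _ = (gauss 0 1).map fun x => m + B *ᵥ x := by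
        rw [← Measure.map_smul, ← withDensity_smul c (hh.comp hT), hdens]; rfl

lemma gauss_eq_map_multivariateGaussian (m : Vec n) {S : Matrix (Fin n) (Fin n) ℝ}
    (hS : S.PosDef) :
    gauss m S = (multivariateGaussian (toLp 2 m) S).map (EuclideanSpace.equiv (Fin n) ℝ) := by
  set B := CFC.sqrt S
  have hBB : B * B = S := CFC.sqrt_mul_sqrt_self S hS.posSemidef.nonneg
  have hBt : Bᵀ = B := (CFC.sqrt_nonneg S).posSemidef.isHermitian
  have hB : B.det ≠ 0 := fun h => hS.det_pos.ne' (by rw [← hBB, det_mul, h, mul_zero])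
  calc gauss m S = (gauss 0 1).map fun x => m + B *ᵥ x := by
        rw [← gauss_mul_transpose hB, hBt, hBB]
    _ = (multivariateGaussian (toLp 2 m) S).map (EuclideanSpace.equiv (Fin n) ℝ) := by
        rw [multivariateGaussian, ← map_pi_eq_stdGaussian, ← gauss_zero_one,
          Measure.map_map (by fun_prop) (by fun_prop), Measure.map_map (by fun_prop) (by fun_prop)]
        rfl

variable {m : Vec n} {S : Matrix (Fin n) (Fin n) ℝ}

lemma isGaussian_gauss (hS : S.PosDef) : IsGaussian (gauss m S) := by
  rw [gauss_eq_map_multivariateGaussian m hS]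
  infer_instance

lemma memLp_id_gauss (hS : S.PosDef) : MemLp id 2 (gauss m S) :=
  have := isGaussian_gauss (m := m) hS
  IsGaussian.memLp_two_id

lemma mean_gauss (hS : S.PosDef) : mean (gauss m S) = m := by
  have := isGaussian_gauss (m := m) hS
  have hint (i : Fin n) : Integrable (fun x => x i) (gauss m S) :=
    ((memLp_id_gauss hS).eval i).integrable one_le_two
  have hmean : mean (gauss m S) = ∫ x, x ∂gauss m S :=
    funext fun i => (eval_integral hint i).symm
  rw [hmean, gauss_eq_map_multivariateGaussian m hS, ContinuousLinearEquiv.integral_id_map,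
    integral_id_multivariateGaussian]
  rfl

lemma cov_gauss (hS : S.PosDef) : cov (gauss m S) = S := by
  have heval (i : Fin n) (ν : Measure (Vec n)) : AEStronglyMeasurable (fun x => x i) ν :=
    (measurable_pi_apply i).aestronglyMeasurable
  ext i j
  calc cov (gauss m S) i j = cov[fun x => x i, fun x => x j; gauss m S] := rfl
    _ = S i j := by
        rw [gauss_eq_map_multivariateGaussian m hS,
          covariance_map (heval i _) (heval j _) (by fun_prop)]
        exact covariance_eval_multivariateGaussian hS.posSemidef i j

end Gaussian

section AdditiveGaussianNoise

open ProbabilityTheory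

variable {Ω : Type*} [MeasurableSpace Ω] {μ : Measure Ω} {n : ℕ}
  {S : Matrix (Fin n) (Fin n) ℝ} {F : Ω → Vec n}

lemma memLp_add_gauss [IsFiniteMeasure μ] (hS : S.PosDef) (hF : MemLp F 2 μ) :
    MemLp (fun p => F p.1 + p.2) 2 (μ.prod (gauss 0 S)) :=
  have := isGaussian_gauss (m := 0) hS
  (hF.comp_fst _).add ((memLp_id_gauss hS).comp_snd μ)

variable [IsProbabilityMeasure μ]

lemma integral_add_gauss (hS : S.PosDef) (hF : MemLp F 2 μ) (i : Fin n) :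
    ∫ p, (F p.1 + p.2) i ∂μ.prod (gauss 0 S) = ∫ ω, F ω i ∂μ := by
  have := isGaussian_gauss (m := 0) hS
  have hmean : ∫ x, x i ∂gauss 0 S = 0 := congrFun (mean_gauss hS) i
  have hFi : Integrable (fun ω => F ω i) μ := (hF.eval i).integrable one_le_two
  have hi : Integrable (fun x => x i) (gauss 0 S) :=
    ((memLp_id_gauss hS).eval i).integrable one_le_two
  simp only [Pi.add_apply]
  rw [integral_add (hFi.comp_fst _) (hi.comp_snd μ), integral_fun_fst (fun ω => F ω i),
    integral_fun_snd (fun x : Vec n => x i), hmean]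
  simp

lemma variance_add_dotProduct_gauss (hS : S.PosDef) {f : Ω → ℝ} (hf : MemLp f 2 μ) (b : Vec n) :
    Var[fun p => f p.1 + b ⬝ᵥ p.2; μ.prod (gauss 0 S)] = Var[f; μ] + b ⬝ᵥ S *ᵥ b := by
  have := isGaussian_gauss (m := 0) hS
  have hb : MemLp (fun x => b ⬝ᵥ x) 2 (gauss 0 S) := memLp_dotProduct (memLp_id_gauss hS) b
  rw [variance_add_prod hf hb, variance_dotProduct (memLp_id_gauss hS), cov_gauss hS]

end AdditiveGaussianNoise

section Prediction

open ProbabilityTheory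

variable {Psi : Vec d → Vec d} {Sig : Matrix (Fin d) (Fin d) ℝ} {μ : Measure (Vec d)}

lemma memLp_id_Pop [IsFiniteMeasure μ] (hSig : Sig.PosDef) (hPsi : Measurable Psi)
    (hPsi' : MemLp Psi 2 μ) : MemLp id 2 (Pop Psi Sig μ) :=
  (memLp_map_measure_iff (by fun_prop) (by fun_prop)).mpr (memLp_add_gauss hSig hPsi')

variable [IsProbabilityMeasure μ]

lemma isProbabilityMeasure_Pop (hSig : Sig.PosDef) (hPsi : Measurable Psi) :
    IsProbabilityMeasure (Pop Psi Sig μ) :=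
  have := isGaussian_gauss (m := 0) hSig
  Measure.isProbabilityMeasure_map (by fun_prop)

lemma mean_Pop (hSig : Sig.PosDef) (hPsi : Measurable Psi) (hPsi' : MemLp Psi 2 μ) :
    mean (Pop Psi Sig μ) = fun i => ∫ v, Psi v i ∂μ := by
  funext i
  rw [mean, Pop, integral_map (by fun_prop)
    (Measurable.aestronglyMeasurable (by fun_prop)), integral_add_gauss hSig hPsi']

lemma dotProduct_cov_Pop_mulVec (hSig : Sig.PosDef) (hPsi : Measurable Psi)
    (hPsi' : MemLp Psi 2 μ) (a : Vec d) :
    a ⬝ᵥ cov (Pop Psi Sig μ) *ᵥ a = Var[fun v => a ⬝ᵥ Psi v; μ] + a ⬝ᵥ Sig *ᵥ a := by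
  have := isProbabilityMeasure_Pop (μ := μ) hSig hPsi
  rw [← variance_dotProduct (memLp_id_Pop hSig hPsi hPsi'), Pop,
    variance_map (by fun_prop) (by fun_prop),
    ← variance_add_dotProduct_gauss hSig (memLp_dotProduct hPsi' a)]
  simp only [Function.comp_def, dotProduct_add]

lemma loe_cov_Pop (hSig : Sig.PosDef) (hPsi : Measurable Psi) (hPsi' : MemLp Psi 2 μ) :
    loe Sig (cov (Pop Psi Sig μ)) :=
  loe_of_dotProduct_mulVec_le hSig.isHermitian (isHermitian_cov _) fun a => by
    rw [dotProduct_cov_Pop_mulVec hSig hPsi hPsi']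
    exact le_add_of_nonneg_left (variance_nonneg _ μ)

lemma cov_Pop_loe (hSig : Sig.PosDef) (hPsi : Measurable Psi) {r : ℝ}
    (hr : ∀ v, enorm (Psi v) ≤ r) : loe (cov (Pop Psi Sig μ)) (r ^ 2 • 1 + Sig) :=
  loe_of_dotProduct_mulVec_le (isHermitian_cov _)
    ((isHermitian_one.smul (.all _)).add hSig.isHermitian) fun a => by
      rw [dotProduct_cov_Pop_mulVec hSig hPsi (memLp_of_enorm_le hPsi hr 2), add_mulVec,
        dotProduct_add, dotProduct_smul_one_mulVec]
      gcongr
      exact variance_dotProduct_le_of_enorm_le hPsi hr a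

end Prediction

section Lifting

open ProbabilityTheory

variable {H : Vec d → Vec K} {Gam : Matrix (Fin K) (Fin K) ℝ} {ν : Measure (Vec d)}

lemma memLp_id_Qop [IsFiniteMeasure ν] (hGam : Gam.PosDef) (hH : Measurable H)
    (hν : MemLp id 2 ν) (hH' : MemLp H 2 ν) : MemLp id 2 (Qop H Gam ν) := by
  have := isGaussian_gauss (m := 0) hGam
  exact (memLp_map_measure_iff (by fun_prop) (by fun_prop)).mpr
    (.of_fst_snd ⟨hν.comp_fst _, memLp_add_gauss hGam hH'⟩)

lemma meanU_Qop [SFinite ν] (hGam : Gam.PosDef) (hH : Measurable H) :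
    meanU (Qop H Gam ν) = mean ν := by
  have := isGaussian_gauss (m := 0) hGam
  funext i
  rw [meanU, Qop, integral_map (by fun_prop)
    (Measurable.aestronglyMeasurable (by fun_prop)), integral_fun_fst (fun u : Vec d => u i)]
  simp [mean]

variable [IsProbabilityMeasure ν]

lemma isProbabilityMeasure_Qop (hGam : Gam.PosDef) (hH : Measurable H) :
    IsProbabilityMeasure (Qop H Gam ν) :=
  have := isGaussian_gauss (m := 0) hGam
  Measure.isProbabilityMeasure_map (by fun_prop)

lemma meanY_Qop (hGam : Gam.PosDef) (hH : Measurable H) (hH' : MemLp H 2 ν) :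
    meanY (Qop H Gam ν) = fun j => ∫ u, H u j ∂ν := by
  funext j
  rw [meanY, Qop, integral_map (by fun_prop)
    (Measurable.aestronglyMeasurable (by fun_prop)), integral_add_gauss hGam hH']

lemma sumElim_dotProduct_covBlock_Qop_mulVec (hGam : Gam.PosDef) (hH : Measurable H)
    (hν : MemLp id 2 ν) (hH' : MemLp H 2 ν) (a : Vec d) (b : Vec K) :
    Sum.elim a b ⬝ᵥ covBlock (Qop H Gam ν) *ᵥ Sum.elim a b =
      Var[fun u => a ⬝ᵥ u + b ⬝ᵥ H u; ν] + b ⬝ᵥ Gam *ᵥ b := by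
  have := isProbabilityMeasure_Qop (ν := ν) hGam hH
  have hf : MemLp (fun u => a ⬝ᵥ u + b ⬝ᵥ H u) 2 ν :=
    (memLp_dotProduct hν a).add (memLp_dotProduct hH' b)
  rw [← variance_dotProduct_add_dotProduct (memLp_id_Qop hGam hH hν hH'), Qop,
    variance_map (by fun_prop) (by fun_prop), ← variance_add_dotProduct_gauss hGam hf]
  simp only [Function.comp_def, dotProduct_add, add_assoc]

variable {r : ℝ}

lemma smul_one_loe_covBlock_Qop {σ γ : ℝ} (hγ : 0 < γ) (hGam : loe (γ • 1) Gam)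
    (hH : Measurable H) (hr : ∀ u, enorm (H u) ≤ r) (hν : MemLp id 2 ν) (hσ : loe (σ • 1) (cov ν)) :
    loe (min (γ * σ / (2 * r ^ 2 + γ)) (γ / 2) • 1) (covBlock (Qop H Gam ν)) := by
  refine loe_of_sumElim_dotProduct_mulVec_le (isHermitian_one.smul (.all _))
    (isHermitian_covBlock _) fun a b => ?_
  have hH' : MemLp H 2 ν := memLp_of_enorm_le hH hr 2
  have haa : 0 ≤ a ⬝ᵥ a := enorm_mul_self a ▸ mul_self_nonneg (enorm a)
  have hbb : 0 ≤ b ⬝ᵥ b := enorm_mul_self b ▸ mul_self_nonneg (enorm b)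
  have hU : σ * (a ⬝ᵥ a) ≤ Var[fun u => a ⬝ᵥ u; ν] := by
    rw [variance_dotProduct hν, ← dotProduct_smul_one_mulVec]
    exact hσ.dotProduct_mulVec_le a
  have hb : γ * (b ⬝ᵥ b) ≤ b ⬝ᵥ Gam *ᵥ b := by
    rw [← dotProduct_smul_one_mulVec]
    exact hGam.dotProduct_mulVec_le b
  rw [dotProduct_smul_one_mulVec, sumElim_dotProduct_sumElim,
    sumElim_dotProduct_covBlock_Qop_mulVec (hGam.posDef hγ) hH hν hH']
  calc _ ≤ γ * σ / (2 * r ^ 2 + γ) * (a ⬝ᵥ a) + γ / 2 * (b ⬝ᵥ b) := by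
        rw [mul_add]
        gcongr
        exacts [min_le_left _ _, min_le_right _ _]
    _ = γ / (2 * r ^ 2 + γ) * (σ * (a ⬝ᵥ a)) + γ / 2 * (b ⬝ᵥ b) := by ring
    _ ≤ γ / (2 * r ^ 2 + γ) * Var[fun u => a ⬝ᵥ u; ν] + γ / 2 * (b ⬝ᵥ b) := by gcongr
    _ ≤ Var[fun u => a ⬝ᵥ u + b ⬝ᵥ H u; ν] + γ / 2 * (b ⬝ᵥ b) + γ / 2 * (b ⬝ᵥ b) := by
        gcongr
        exact mul_variance_le_variance_add (memLp_dotProduct hν a) (memLp_dotProduct hH' b) hγ hbb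
          (variance_dotProduct_le_of_enorm_le hH hr b)
    _ ≤ Var[fun u => a ⬝ᵥ u + b ⬝ᵥ H u; ν] + b ⬝ᵥ Gam *ᵥ b := by linarith

lemma covBlock_Qop_loe (hGam : Gam.PosDef) (hH : Measurable H) (hr : ∀ u, enorm (H u) ≤ r)
    (hν : MemLp id 2 ν) {A : Matrix (Fin d) (Fin d) ℝ} (hA : loe (cov ν) A) :
    loe (covBlock (Qop H Gam ν)) (fromBlocks ((2 : ℝ) • A) 0 0 ((2 * r ^ 2) • 1 + Gam)) := by
  have hH' : MemLp H 2 ν := memLp_of_enorm_le hH hr 2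
  have hblocks : (fromBlocks ((2 : ℝ) • A) 0 0 ((2 * r ^ 2) • 1 + Gam)).IsHermitian :=
    .fromBlocks ((hA.isHermitian_right (isHermitian_cov ν)).smul (.all _)) (conjTranspose_zero ..)
      ((isHermitian_one.smul (.all _)).add hGam.isHermitian)
  refine loe_of_sumElim_dotProduct_mulVec_le (isHermitian_covBlock _) hblocks fun a b => ?_
  rw [sumElim_dotProduct_covBlock_Qop_mulVec hGam hH hν hH']
  calc Var[fun u => a ⬝ᵥ u + b ⬝ᵥ H u; ν] + b ⬝ᵥ Gam *ᵥ b
      ≤ 2 * (Var[fun u => a ⬝ᵥ u; ν] + Var[fun u => b ⬝ᵥ H u; ν]) + b ⬝ᵥ Gam *ᵥ b := by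
        gcongr
        exact variance_add_le_two_mul_add (memLp_dotProduct hν a) (memLp_dotProduct hH' b)
    _ ≤ 2 * (a ⬝ᵥ A *ᵥ a + r ^ 2 * (b ⬝ᵥ b)) + b ⬝ᵥ Gam *ᵥ b := by
        gcongr
        · exact (variance_dotProduct hν a).trans_le (hA.dotProduct_mulVec_le a)
        · exact variance_dotProduct_le_of_enorm_le hH hr b
    _ = _ := by
        simp only [fromBlocks_mulVec, Sum.elim_comp_inl, Sum.elim_comp_inr, zero_mulVec, add_zero,
          zero_add, sumElim_dotProduct_sumElim, add_mulVec, smul_mulVec, one_mulVec,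
          dotProduct_add, dotProduct_smul, smul_eq_mul]
        ring

end Lifting

/-- **Moment bounds for the lifted predicted measure** (Lemma A.2). -/
theorem moment_bounds_QP
    (d K : ℕ) (κΨ κH σ γ : ℝ) (hσ : 0 < σ) (hγ : 0 < γ)
    (Psi : Vec d → Vec d) (H : Vec d → Vec K)
    (hPsim : Measurable Psi) (hHm : Measurable H)
    (hPsib : ∀ v, enorm (Psi v) ≤ κΨ) (hHb : ∀ v, enorm (H v) ≤ κH)
    (Sig : Matrix (Fin d) (Fin d) ℝ) (Gam : Matrix (Fin K) (Fin K) ℝ)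
    (hSig : loe (σ • 1) Sig) (hGam : loe (γ • 1) Gam)
    (μ : Measure (Vec d)) (hμ : IsProbabilityMeasure μ) :
    enorm (Sum.elim (meanU (Qop H Gam (Pop Psi Sig μ))) (meanY (Qop H Gam (Pop Psi Sig μ))))
        ≤ Real.sqrt (κΨ ^ 2 + κH ^ 2) ∧
    loe (min (γ * σ / (2 * κH ^ 2 + γ)) (γ / 2) • 1)
      (covBlock (Qop H Gam (Pop Psi Sig μ))) ∧
    loe (covBlock (Qop H Gam (Pop Psi Sig μ)))
      (Matrix.fromBlocks ((2 * κΨ ^ 2) • 1 + (2 : ℝ) • Sig) 0 0 ((2 * κH ^ 2) • 1 + Gam)) := by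
  have hSig' : Sig.PosDef := hSig.posDef hσ
  have hGam' : Gam.PosDef := hGam.posDef hγ
  have hPsi : MemLp Psi 2 μ := memLp_of_enorm_le hPsim hPsib 2
  have : IsProbabilityMeasure (Pop Psi Sig μ) := isProbabilityMeasure_Pop hSig' hPsim
  have hPop : MemLp id 2 (Pop Psi Sig μ) := memLp_id_Pop hSig' hPsim hPsi
  refine ⟨?_, ?_, ?_⟩
  · rw [meanU_Qop hGam' hHm, mean_Pop hSig' hPsim hPsi,
      meanY_Qop hGam' hHm (memLp_of_enorm_le hHm hHb 2)]
    exact enorm_sumElim_le (enorm_integral_le hPsim hPsib) (enorm_integral_le hHm hHb)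
  · exact smul_one_loe_covBlock_Qop hγ hGam hHm hHb hPop
      (hSig.trans (loe_cov_Pop hSig' hPsim hPsi))
  · have h := covBlock_Qop_loe hGam' hHm hHb hPop (cov_Pop_loe hSig' hPsim hPsib)
    rwa [smul_add, smul_smul] at h

end EnKF
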